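/- lim_{n→∞} Σ_{p=0}^{n} a_{n,p,0}² = 0. -/

import Mathlib

open Real Finset Filter

/-!
Substituting `s = cos x`, `t = cos y` turns the expansion into
`T_n ((s + t) / 2) = ∑ a_{n,p,q} T_p(s) T_q(t)` on `[-1, 1]²`, and integrating out `t` against the
Chebyshev weight leaves `g_n(s) = ∑ a_{n,p,0} T_p(s)`, where `π g_n(s)` is the integral of `T_n`
against the image of the weight under `t ↦ (s + t) / 2`. This image is absolutely continuous, and
remains so when pushed forward by `arccos`, whose left inverse `cos` is differentiable everywhere;
there `T_n` becomes `cos (n ·)`, so `g_n → 0` pointwise on `[-1, 1]` by the Riemann–Lebesgue lemma.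
As `|g_n| ≤ 1`, also `∫ g_n² → 0`, and by orthogonality this integral dominates
`π / 2 * ∑ a_{n,p,0}²`.
-/

open MeasureTheory Polynomial.Chebyshev
open scoped Topology

section RiemannLebesgue

theorem tendsto_charFun_cocompact {E : Type*} [NormedAddCommGroup E] [InnerProductSpace ℝ E]
    [FiniteDimensional ℝ E] [MeasurableSpace E] [BorelSpace E] {ν : Measure E} [IsFiniteMeasure ν]
    (hν : ν ≪ volume) : Tendsto (charFun ν) (cocompact E) (𝓝 0) := by
  have hscale : Tendsto (fun t : E ↦ -(2 * π)⁻¹ • t) (cocompact E) (cocompact E) :=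
    (Homeomorph.smulOfNeZero _ (by simp [pi_ne_zero])).isClosedEmbedding.tendsto_cocompact
  refine ((tendsto_integral_exp_inner_smul_cocompact
    fun x ↦ ((ν.rnDeriv volume x).toReal : ℂ)).comp hscale).congr fun t ↦ ?_
  rw [charFun_eq_fourierIntegral', VectorFourier.fourierIntegral, ← integral_rnDeriv_smul hν]
  refine integral_congr_ae (.of_forall fun x ↦ ?_)
  simp [Circle.smul_def, mul_comm]

theorem tendsto_integral_cos_mul_cocompact {ν : Measure ℝ} [IsFiniteMeasure ν]
    (hν : ν ≪ volume) : Tendsto (fun t : ℝ ↦ ∫ u, cos (t * u) ∂ν) (cocompact ℝ) (𝓝 0) := by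
  refine ((Complex.continuous_re.tendsto 0).comp (tendsto_charFun_cocompact hν)).congr fun t ↦ ?_
  have hint : Integrable (fun u : ℝ ↦ Complex.exp (t * u * Complex.I)) ν :=
    .of_bound (by fun_prop) 1 (.of_forall fun u ↦ by
      simpa using (Complex.norm_exp_ofReal_mul_I (t * u)).le)
  rw [Function.comp_apply, charFun_apply_real, ← RCLike.re_to_complex, ← integral_re hint]
  refine integral_congr_ae (.of_forall fun u ↦ ?_)
  simpa using Complex.exp_ofReal_mul_I_re (t * u)

theorem absolutelyContinuous_map_of_differentiable_leftInverse {E : Type*} [NormedAddCommGroup E]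
    [NormedSpace ℝ E] [FiniteDimensional ℝ E] [MeasurableSpace E] [BorelSpace E]
    {μ ν : Measure E} [μ.IsAddHaarMeasure] (hν : ν ≪ μ) {f g : E → E} (hf : Measurable f)
    (hg : Differentiable ℝ g) (hgf : ∀ᵐ x ∂ν, g (f x) = x) : ν.map f ≪ μ := by
  refine .mk fun s hs hμs ↦ ?_
  have himage : ν (g '' s) = 0 :=
    hν (addHaar_image_eq_zero_of_differentiableOn_of_addHaar_eq_zero μ hg.differentiableOn hμs)
  rw [Measure.map_apply hf hs]
  refine measure_mono_null_ae ?_ himage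
  filter_upwards [hgf] with x hx hxs using ⟨f x, hxs, hx⟩

theorem eval_T_eq_cos_mul_arccos (n : ℤ) {x : ℝ} (hx : |x| ≤ 1) :
    (T ℝ n).eval x = cos (n * arccos x) := by
  rw [← T_real_cos, cos_arccos (neg_le_of_abs_le hx) (le_of_abs_le hx)]

theorem tendsto_integral_eval_T {ν : Measure ℝ} [IsFiniteMeasure ν] (hν : ν ≪ volume)
    (hsupp : ∀ᵐ x ∂ν, |x| ≤ 1) :
    Tendsto (fun n : ℕ ↦ ∫ x, (T ℝ n).eval x ∂ν) atTop (𝓝 0) := by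
  have hmeas : Measurable arccos := continuous_arccos.measurable
  have hac : ν.map arccos ≪ volume :=
    absolutelyContinuous_map_of_differentiable_leftInverse hν hmeas differentiable_cos <| by
      filter_upwards [hsupp] with x hx
      exact cos_arccos (neg_le_of_abs_le hx) (le_of_abs_le hx)
  have hcast : Tendsto (Nat.cast : ℕ → ℝ) atTop (cocompact ℝ) :=
    tendsto_natCast_atTop_atTop.mono_right atTop_le_cocompact
  refine ((tendsto_integral_cos_mul_cocompact hac).comp hcast).congr fun n ↦ ?_
  rw [Function.comp_apply, integral_map hmeas.aemeasurable (by fun_prop)]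
  refine integral_congr_ae ?_
  filter_upwards [hsupp] with x hx
  simpa using (eval_T_eq_cos_mul_arccos n hx).symm

end RiemannLebesgue

section ChebyshevWeight

theorem measureT_absolutelyContinuous : measureT ≪ volume :=
  Measure.absolutelyContinuous_of_le Measure.restrict_le_self |>.trans
    (withDensity_absolutelyContinuous _ _)

theorem ae_measureT_abs_le_one : ∀ᵐ x ∂measureT, |x| ≤ 1 := by
  filter_upwards [ae_restrict_mem measurableSet_Ioc] with x hx
  exact abs_le.2 ⟨hx.1.le, hx.2⟩

instance isFiniteMeasure_measureT : IsFiniteMeasure measureT := by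
  have hint : Integrable (fun _ ↦ (1 : ℝ)) measureT := integrable_measureT continuousOn_const
  exact (integrable_const_iff_isFiniteMeasure one_ne_zero).1 hint

theorem measureT_real_univ : measureT.real Set.univ = π := by
  simpa using integral_eval_T_real_measureT_zero

theorem integral_eval_T_measureT (n : ℕ) :
    ∫ x, (T ℝ n).eval x ∂measureT = if n = 0 then π else 0 := by
  split_ifs with hn
  · simpa [hn] using integral_eval_T_real_measureT_zero
  · exact integral_eval_T_real_measureT_of_ne_zero (by exact_mod_cast hn)

theorem integral_sum_mul_eval_T_measureT {S : Finset ℕ} (hS : 0 ∈ S) (b : ℕ → ℝ) :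
    ∫ x, ∑ p ∈ S, b p * (T ℝ p).eval x ∂measureT = π * b 0 := by
  rw [integral_finsetSum _ fun _ _ ↦ integrable_measureT (by fun_prop)]
  simp [integral_const_mul, integral_eval_T_measureT, hS, mul_comm]

theorem pi_div_two_le_integral_sq_eval_T (n : ℕ) :
    π / 2 ≤ ∫ x, (T ℝ n).eval x * (T ℝ n).eval x ∂measureT := by
  rcases eq_or_ne n 0 with rfl | hn
  · exact (half_le_self pi_pos.le).trans_eq integral_eval_T_real_mul_self_measureT_zero.symm
  · exact (integral_T_real_mul_self_measureT_of_ne_zero hn).ge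

theorem integral_sq_sum_mul_eval_T_measureT (S : Finset ℕ) (b : ℕ → ℝ) :
    ∫ x, (∑ p ∈ S, b p * (T ℝ p).eval x) ^ 2 ∂measureT =
      ∑ p ∈ S, b p ^ 2 * ∫ x, (T ℝ p).eval x * (T ℝ p).eval x ∂measureT := by
  simp_rw [sq, sum_mul_sum, mul_mul_mul_comm (b _)]
  rw [integral_finsetSum _ fun _ _ ↦ integrable_measureT (by fun_prop)]
  refine sum_congr rfl fun p hp ↦ ?_
  rw [integral_finsetSum _ fun _ _ ↦ integrable_measureT (by fun_prop)]
  simp_rw [integral_const_mul]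
  refine sum_eq_single_of_mem p hp fun q _ hqp ↦ ?_
  rw [integral_eval_T_real_mul_eval_T_real_measureT_of_ne hqp.symm, mul_zero]

theorem sum_sq_le_integral_sq_sum_mul_eval_T (S : Finset ℕ) (b : ℕ → ℝ) :
    ∑ p ∈ S, b p ^ 2 ≤ 2 / π * ∫ x, (∑ p ∈ S, b p * (T ℝ p).eval x) ^ 2 ∂measureT := by
  rw [integral_sq_sum_mul_eval_T_measureT, mul_sum]
  refine sum_le_sum fun p _ ↦ ?_
  calc b p ^ 2 = 2 / π * (b p ^ 2 * (π / 2)) := by field_simp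
    _ ≤ 2 / π * (b p ^ 2 * ∫ x, (T ℝ p).eval x * (T ℝ p).eval x ∂measureT) := by
      gcongr
      exact pi_div_two_le_integral_sq_eval_T p

theorem tendsto_sum_sq_of_tendsto_sum_mul_eval_T {ι : Type*} {l : Filter ι}
    [l.IsCountablyGenerated] {S : ι → Finset ℕ} {b : ι → ℕ → ℝ} {C : ℝ}
    (hbdd : ∀ i, ∀ᵐ x ∂measureT, |∑ p ∈ S i, b i p * (T ℝ p).eval x| ≤ C)
    (hlim : ∀ᵐ x ∂measureT, Tendsto (fun i ↦ ∑ p ∈ S i, b i p * (T ℝ p).eval x) l (𝓝 0)) :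
    Tendsto (fun i ↦ ∑ p ∈ S i, b i p ^ 2) l (𝓝 0) := by
  have hint : Tendsto (fun i ↦ ∫ x, (∑ p ∈ S i, b i p * (T ℝ p).eval x) ^ 2 ∂measureT) l
      (𝓝 (∫ _, 0 ∂measureT)) := by
    refine tendsto_integral_filter_of_dominated_convergence (fun _ ↦ C ^ 2)
      (.of_forall fun i ↦ by fun_prop) (.of_forall fun i ↦ ?_) (integrable_const _) ?_
    · filter_upwards [hbdd i] with x hx
      simpa only [norm_pow] using pow_le_pow_left₀ (norm_nonneg _) hx 2
    · filter_upwards [hlim] with x hx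
      simpa using hx.pow 2
  refine squeeze_zero (fun i ↦ sum_nonneg fun p _ ↦ sq_nonneg _)
    (fun i ↦ sum_sq_le_integral_sq_sum_mul_eval_T (S i) (b i)) ?_
  simpa using hint.const_mul (2 / π)

end ChebyshevWeight

section AffineSubstitution

variable {c r : ℝ}

theorem abs_add_mul_le_one (hcr : |c| + |r| ≤ 1) {t : ℝ} (ht : |t| ≤ 1) : |c + r * t| ≤ 1 :=
  calc |c + r * t| ≤ |c| + |r| * |t| := (abs_add_le _ _).trans_eq (by rw [abs_mul])
    _ ≤ |c| + |r| := by grw [ht, mul_one]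
    _ ≤ 1 := hcr

theorem abs_integral_eval_T_affine_le_pi (n : ℤ) (hcr : |c| + |r| ≤ 1) :
    |∫ t, (T ℝ n).eval (c + r * t) ∂measureT| ≤ π := by
  have hbound : ∀ᵐ t ∂measureT, ‖(T ℝ n).eval (c + r * t)‖ ≤ 1 := by
    filter_upwards [ae_measureT_abs_le_one] with t ht
    exact abs_eval_T_real_le_one n (abs_add_mul_le_one hcr ht)
  simpa [measureT_real_univ] using norm_integral_le_of_norm_le_const hbound

theorem tendsto_integral_eval_T_affine (hcr : |c| + |r| ≤ 1) (hr : r ≠ 0) :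
    Tendsto (fun n : ℕ ↦ ∫ t, (T ℝ n).eval (c + r * t) ∂measureT) atTop (𝓝 0) := by
  have hmeas : Measurable fun t ↦ c + r * t := by fun_prop
  have hac : measureT.map (fun t ↦ c + r * t) ≪ volume :=
    absolutelyContinuous_map_of_differentiable_leftInverse measureT_absolutelyContinuous hmeas
      (g := fun u ↦ (u - c) / r) (by fun_prop) (.of_forall fun t ↦ by field_simp; ring)
  have hsupp : ∀ᵐ u ∂measureT.map (fun t ↦ c + r * t), |u| ≤ 1 := by
    rw [ae_map_iff hmeas.aemeasurable (measurableSet_le (by fun_prop) (by fun_prop))]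
    filter_upwards [ae_measureT_abs_le_one] with t ht using abs_add_mul_le_one hcr ht
  refine (tendsto_integral_eval_T hac hsupp).congr fun n ↦ ?_
  exact integral_map hmeas.aemeasurable (by fun_prop)

end AffineSubstitution

section CosineExpansion

variable {F : ℝ → ℝ → ℝ} {P Q : Finset ℕ} {a : ℕ → ℕ → ℝ}

theorem eq_sum_eval_T_of_cos_expansion
    (hF : ∀ x y, F (cos x) (cos y) = ∑ p ∈ P, ∑ q ∈ Q, a p q * cos (p * x) * cos (q * y))
    {s t : ℝ} (hs : |s| ≤ 1) (ht : |t| ≤ 1) :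
    F s t = ∑ q ∈ Q, (∑ p ∈ P, a p q * (T ℝ p).eval s) * (T ℝ q).eval t := by
  obtain ⟨x, rfl⟩ : ∃ x, cos x = s := ⟨_, cos_arccos (neg_le_of_abs_le hs) (le_of_abs_le hs)⟩
  obtain ⟨y, rfl⟩ : ∃ y, cos y = t := ⟨_, cos_arccos (neg_le_of_abs_le ht) (le_of_abs_le ht)⟩
  rw [hF, sum_comm]
  simp [T_real_cos, sum_mul]

theorem integral_eq_sum_eval_T_of_cos_expansion
    (hF : ∀ x y, F (cos x) (cos y) = ∑ p ∈ P, ∑ q ∈ Q, a p q * cos (p * x) * cos (q * y))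
    (hQ : 0 ∈ Q) {s : ℝ} (hs : |s| ≤ 1) :
    ∫ t, F s t ∂measureT = π * ∑ p ∈ P, a p 0 * (T ℝ p).eval s := by
  rw [← integral_sum_mul_eval_T_measureT hQ fun q ↦ ∑ p ∈ P, a p q * (T ℝ p).eval s]
  refine integral_congr_ae ?_
  filter_upwards [ae_measureT_abs_le_one] with t ht using eq_sum_eval_T_of_cos_expansion hF hs ht

end CosineExpansion

/-- `lim_{n→∞} Σ_{p=0}^{n} a_{n,p,0}² = 0`. -/
theorem sum_sq_boundary_coeff_tendsto_zero
    (a : ℕ → ℕ → ℕ → ℝ)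
    (ha : ∀ (n : ℕ) (x y : ℝ),
      (Polynomial.Chebyshev.T ℝ n).eval ((Real.cos x + Real.cos y) / 2) =
        ∑ p ∈ Finset.range (n + 1), ∑ q ∈ Finset.range (n + 1),
          a n p q * Real.cos (p * x) * Real.cos (q * y)) :
    Filter.Tendsto (fun n : ℕ => ∑ p ∈ Finset.range (n + 1), (a n p 0) ^ 2)
      Filter.atTop (nhds 0) := by
  have hsum {s : ℝ} (hs : |s| ≤ 1) (n : ℕ) : ∑ p ∈ range (n + 1), a n p 0 * (T ℝ p).eval s =
      (∫ t, (T ℝ n).eval (s / 2 + 1 / 2 * t) ∂measureT) / π := by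
    rw [eq_div_iff pi_ne_zero, mul_comm]
    refine (integral_eq_sum_eval_T_of_cos_expansion
      (F := fun s t ↦ (T ℝ n).eval (s / 2 + 1 / 2 * t)) (fun x y ↦ ?_)
      (mem_range.2 n.succ_pos) hs).symm
    rw [← ha]
    ring_nf
  have hweight {s : ℝ} (hs : |s| ≤ 1) : |s / 2| + |(1 / 2 : ℝ)| ≤ 1 := by
    rw [abs_div, abs_two, abs_of_pos (one_half_pos (α := ℝ))]
    linarith
  refine tendsto_sum_sq_of_tendsto_sum_mul_eval_T (C := 1) (fun n ↦ ?_) ?_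
  · filter_upwards [ae_measureT_abs_le_one] with s hs
    rw [hsum hs, abs_div, abs_of_pos pi_pos, div_le_one pi_pos]
    exact abs_integral_eval_T_affine_le_pi n (hweight hs)
  · filter_upwards [ae_measureT_abs_le_one] with s hs
    simp_rw [hsum hs]
    simpa using (tendsto_integral_eval_T_affine (hweight hs) (by norm_num)).div_const π
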